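/- Let G=(V,p,μ) be a weighted graph with bounded geometry satisfying CD(0,n) for some positive integer n. Then for every bounded function f:V→ℝ, every t>0 and every x∈V, Γ(P_t f)(x) ≤ P_t(Γf)(x) − (2t/n)·(P_t(Δf)(x))². -/

import Mathlib

/-- A weighted graph `G = (V, p, μ)`: a nonnegative kernel `p` and a positive
measure `μ` on the vertex set `V`, such that `G` is locally finite, `p` is a
Markov kernel, and `G` is connected.  Vertices `x, y` are neighbours (`x ∼ y`)
iff `0 < p x y`. -/
structure WeightedGraph (V : Type*) where
  p : V → V → ℝ
  μ : V → ℝ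
  p_nonneg : ∀ x y, 0 ≤ p x y
  μ_pos : ∀ x, 0 < μ x
  locallyFinite : ∀ x, {y | 0 < p x y}.Finite
  markov : ∀ x, HasSum (p x) 1
  connected : ∀ x y : V, ∃ n : ℕ, ∃ c : Fin (n + 1) → V,
      c 0 = x ∧ c (Fin.last n) = y ∧ ∀ i : Fin n, 0 < p (c i.castSucc) (c i.succ)

namespace WeightedGraph

variable {V : Type*} (G : WeightedGraph V)

/-- The Laplacian `Δ f (x) = ∑_{y ∼ x} p x y * (f y - f x)`.  (Summing over all
of `V` is the same, since `p x y = 0` unless `y ∼ x`.) -/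
noncomputable def lap (f : V → ℝ) (x : V) : ℝ := ∑' y, G.p x y * (f y - f x)

/-- The carré du champ `Γ f (x) = (1/2) ∑_{y ∼ x} p x y * (f y - f x)^2`. -/
noncomputable def gamma (f : V → ℝ) (x : V) : ℝ := (1 / 2) * ∑' y, G.p x y * (f y - f x) ^ 2

/-- The bilinear carré du champ
`Γ(f,g)(x) = (1/2) ∑_{y ∼ x} p x y * (f y - f x) * (g y - g x)`. -/
noncomputable def gammaBil (f g : V → ℝ) (x : V) : ℝ :=
  (1 / 2) * ∑' y, G.p x y * (f y - f x) * (g y - g x)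

/-- The iterated carré du champ `Γ₂ f = (1/2) Δ (Γ f) - Γ(f, Δ f)`. -/
noncomputable def gamma2 (f : V → ℝ) (x : V) : ℝ :=
  (1 / 2) * G.lap (G.gamma f) x - G.gammaBil f (G.lap f) x

/-- Bounded geometry with constant `α > 0`: the uniform ellipticity condition (A1)
`p x y ≥ α` whenever `x ∼ y`, and the reversibility condition (A2)
`p x y * μ x = p y x * μ y`. -/
def BoundedGeometry (α : ℝ) : Prop :=
  0 < α ∧ (∀ x y, 0 < G.p x y → α ≤ G.p x y) ∧ ∀ x y, G.p x y * G.μ x = G.p y x * G.μ y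

/-- The Bakry–Émery curvature-dimension condition `CD(K, n)`:
`Γ₂ f ≥ (1/n) (Δ f)² + K Γ f`. -/
def CD (K : ℝ) (n : ℕ) : Prop :=
  ∀ f : V → ℝ, ∀ x : V, (1 / (n : ℝ)) * G.lap f x ^ 2 + K * G.gamma f x ≤ G.gamma2 f x

/-- The Bakry–Émery curvature-dimension condition `CD(K, ∞)`: `Γ₂ f ≥ K Γ f`. -/
def CDInfty (K : ℝ) : Prop :=
  ∀ f : V → ℝ, ∀ x : V, K * G.gamma f x ≤ G.gamma2 f x

/-- The graph distance `d(x,y)`: the least length of a path of consecutive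
neighbours joining `x` to `y` (and `0` if `x = y`). -/
noncomputable def dist (x y : V) : ℕ :=
  sInf {n : ℕ | ∃ c : Fin (n + 1) → V,
    c 0 = x ∧ c (Fin.last n) = y ∧ ∀ i : Fin n, 0 < G.p (c i.castSucc) (c i.succ)}

/-- The measure `μ(B(x,r)) = ∑_{y : d(x,y) ≤ r} μ y` of the closed ball `B(x,r)`. -/
noncomputable def ballMeasure (x : V) (r : ℝ) : ℝ :=
  ∑' y : {y : V // (G.dist x y : ℝ) ≤ r}, G.μ y

end WeightedGraph

/-- The sup norm `‖f‖_∞ = sup_x |f x|` of a (bounded) function on `V`. -/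
noncomputable def supNorm {V : Type*} (f : V → ℝ) : ℝ := ⨆ x, |f x|

namespace WeightedGraph

/-- The heat semigroup `P_t = e^{tΔ} = ∑_{k ≥ 0} t^k Δ^k / k!`, applied pointwise. -/
noncomputable def heatSem {V : Type*} (G : WeightedGraph V) (t : ℝ) (f : V → ℝ) (x : V) : ℝ :=
  ∑' k : ℕ, t ^ k / (Nat.factorial k : ℝ) * ((G.lap)^[k] f) x

end WeightedGraph

/-!
The argument is Bakry and Émery's semigroup interpolation. Since `Δ` is a bounded operator on
`ℓ^∞(V)`, the map `s ↦ P_s Γ(P_{t-s} f)` is differentiable in norm, and its derivative is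
`2 P_s Γ₂(P_{t-s} f)`. By `CD(0, n)`, positivity of `P_s` and Jensen's inequality, this is at least
`(2/n) P_s (Δ P_{t-s} f)² ≥ (2/n) (P_s Δ P_{t-s} f)² = (2/n) (P_t Δ f)²`, which does not depend
on `s`. Integrating over `[0, t]` gives the claim.

Positivity comes from writing `Δ = M - 1` with `M` the averaging operator, so that
`P_t = e^{-t} e^{tM}`.
-/

open NormedSpace Set
open scoped ENNReal lp

section ExpSemigroup

variable {F : Type*} [NormedAddCommGroup F] [NormedSpace ℝ F]

theorem apply_exp_smul_apply (T : F →L[ℝ] F) (t : ℝ) (a : F) :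
    T (exp (t • T) a) = exp (t • T) (T a) :=
  DFunLike.congr_fun ((Commute.refl T).smul_right t).exp_right.eq a

theorem exp_zero_smul_apply (T : F →L[ℝ] F) (a : F) : exp ((0 : ℝ) • T) a = a := by
  rw [zero_smul, exp_zero, one_apply_eq_self]

variable [CompleteSpace F]

theorem exp_smul_apply_exp_smul_apply (T : F →L[ℝ] F) (s t : ℝ) (a : F) :
    exp (s • T) (exp (t • T) a) = exp ((s + t) • T) a := by
  let _ : NormedAlgebra ℚ (F →L[ℝ] F) := .restrictScalars ℚ ℝ _
  rw [add_smul, exp_add_of_commute (((Commute.refl T).smul_left s).smul_right t),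
    mul_apply_eq_comp]

theorem exp_smul_sub_one {A : Type*} [NormedRing A] [NormedAlgebra ℝ A] [CompleteSpace A]
    (t : ℝ) (a : A) : exp (t • (a - 1)) = Real.exp (-t) • exp (t • a) := by
  let _ : NormedAlgebra ℚ A := .restrictScalars ℚ ℝ _
  have h : t • (a - 1) = algebraMap ℝ A (-t) + t • a := by
    rw [Algebra.algebraMap_eq_smul_one, smul_sub, neg_smul, neg_add_eq_sub]
  rw [h, exp_add_of_commute (Algebra.commutes _ _), ← algebraMap_exp_comm, ← Real.exp_eq_exp_ℝ,
    ← Algebra.smul_def]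

theorem hasSum_exp_smul_apply (T : F →L[ℝ] F) (t : ℝ) (a : F) :
    HasSum (fun k : ℕ ↦ (t ^ k / k.factorial) • (T ^ k) a) (exp (t • T) a) := by
  have h := (exp_series_hasSum_exp' (𝕂 := ℝ) (t • T)).mapL (ContinuousLinearMap.apply ℝ F a)
  simpa only [smul_pow, smul_smul, ContinuousLinearMap.apply_apply, _root_.smul_apply,
    inv_mul_eq_div] using h

theorem exp_smul_apply_of_apply_eq_zero {T : F →L[ℝ] F} {a : F} (ha : T a = 0) (t : ℝ) :
    exp (t • T) a = a := by
  refine (hasSum_exp_smul_apply T t a).unique ?_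
  convert hasSum_ite_eq 0 a using 2 with k
  cases k <;> simp [pow_succ, ha]

theorem hasDerivAt_exp_sub_smul_apply (T : F →L[ℝ] F) (t s : ℝ) (a : F) :
    HasDerivAt (fun s ↦ exp ((t - s) • T) a) (-T (exp ((t - s) • T) a)) s := by
  have h := ((hasDerivAt_exp_smul_const' T (t - s)).comp_const_sub t s).clm_apply
    (hasDerivAt_const s a)
  simpa using h

end ExpSemigroup

section CarreDuChamp

variable {A : Type*} [NormedCommRing A] [NormedAlgebra ℝ A]

/-- The carré du champ `Γ(a, b) = (L(ab) - a L b - b L a) / 2` of a bounded operator `L` on a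
commutative Banach algebra. -/
noncomputable def carreDuChamp (L : A →L[ℝ] A) (a b : A) : A :=
  (1 / 2 : ℝ) • (L (a * b) - a * L b - b * L a)

/-- The iterated carré du champ `Γ₂(a) = L Γ(a, a) / 2 - Γ(a, L a)` of a bounded operator `L` on a
commutative Banach algebra. -/
noncomputable def iteratedCarreDuChamp (L : A →L[ℝ] A) (a : A) : A :=
  (1 / 2 : ℝ) • L (carreDuChamp L a a) - carreDuChamp L a (L a)

theorem carreDuChamp_neg_right (L : A →L[ℝ] A) (a b : A) :
    carreDuChamp L a (-b) = -carreDuChamp L a b := by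
  simp only [carreDuChamp, mul_neg, map_neg, neg_mul, ← smul_neg]
  congr 1
  ring

theorem hasDerivAt_carreDuChamp_self (L : A →L[ℝ] A) {u : ℝ → A} {u' : A} {s : ℝ}
    (hu : HasDerivAt u u' s) :
    HasDerivAt (fun s ↦ carreDuChamp L (u s) (u s)) ((2 : ℝ) • carreDuChamp L (u s) u') s := by
  have hLu := L.hasFDerivAt.comp_hasDerivAt s hu
  have hLuu := L.hasFDerivAt.comp_hasDerivAt s (hu.mul hu)
  convert! ((hLuu.sub (hu.mul hLu)).sub (hu.mul hLu)).const_smul (1 / 2 : ℝ) using 1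
  simp only [carreDuChamp, smul_smul, Function.comp_apply, map_add, mul_comm u' (u s)]
  module

variable [CompleteSpace A]

theorem hasDerivAt_exp_smul_carreDuChamp (L : A →L[ℝ] A) (a : A) (t s : ℝ) :
    HasDerivAt
      (fun s ↦ exp (s • L) (carreDuChamp L (exp ((t - s) • L) a) (exp ((t - s) • L) a)))
      ((2 : ℝ) • exp (s • L) (iteratedCarreDuChamp L (exp ((t - s) • L) a))) s := by
  convert! (hasDerivAt_exp_smul_const L s).clm_apply
    (hasDerivAt_carreDuChamp_self L (hasDerivAt_exp_sub_smul_apply L t s a)) using 1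
  rw [carreDuChamp_neg_right, iteratedCarreDuChamp, mul_apply_eq_comp, map_sub,
    map_smul, map_smul, map_neg]
  module

theorem apply_carreDuChamp_exp_smul_le (L : A →L[ℝ] A) (φ : A →L[ℝ] ℝ) {c t : ℝ} (ht : 0 ≤ t)
    (h : ∀ s ∈ Icc 0 t, ∀ b,
      c * φ (exp (s • L) (L b)) ^ 2 ≤ φ (exp (s • L) (iteratedCarreDuChamp L b))) (a : A) :
    φ (carreDuChamp L (exp (t • L) a) (exp (t • L) a)) ≤
      φ (exp (t • L) (carreDuChamp L a a)) - 2 * t * c * φ (exp (t • L) (L a)) ^ 2 := by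
  have hderiv s := φ.hasFDerivAt.comp_hasDerivAt s (hasDerivAt_exp_smul_carreDuChamp L a t s)
  have hbound : ∀ s ∈ Icc 0 t, 2 * c * φ (exp (t • L) (L a)) ^ 2 ≤
      φ ((2 : ℝ) • exp (s • L) (iteratedCarreDuChamp L (exp ((t - s) • L) a))) := by
    intro s hs
    have := h s hs (exp ((t - s) • L) a)
    rw [apply_exp_smul_apply, exp_smul_apply_exp_smul_apply, add_sub_cancel] at this
    rw [map_smul, smul_eq_mul]
    linarith
  have hmean := (convex_Icc 0 t).mul_sub_le_image_sub_of_le_deriv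
    (fun s _ ↦ (hderiv s).continuousAt.continuousWithinAt)
    (fun s _ ↦ (hderiv s).differentiableAt.differentiableWithinAt)
    (fun s hs ↦ (hbound s (interior_subset hs)).trans_eq (hderiv s).deriv.symm)
    0 (left_mem_Icc.2 ht) t (right_mem_Icc.2 ht) ht
  simp only [Function.comp_apply, sub_self, sub_zero, exp_zero_smul_apply] at hmean
  linarith

end CarreDuChamp

theorem sq_map_le_map_mul_self {A : Type*} [CommRing A] [Algebra ℝ A] (φ : A →ₗ[ℝ] ℝ)
    (hφ : ∀ a, 0 ≤ φ (a * a)) (hφ_one : φ 1 = 1) (a : A) : φ a ^ 2 ≤ φ (a * a) := by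
  have hexpand : (a - φ a • 1) * (a - φ a • 1) = a * a - (2 * φ a) • a + φ a ^ 2 • (1 : A) := by
    simp only [Algebra.smul_def, map_mul, map_pow, map_ofNat]
    ring
  have hvariance := hφ (a - φ a • 1)
  simp only [hexpand, map_add, map_sub, map_smul, hφ_one, smul_eq_mul] at hvariance
  linarith

theorem exp_smul_apply_nonneg {ι : Type*} {T : ℓ^∞(ι, ℝ) →L[ℝ] ℓ^∞(ι, ℝ)}
    (hT : ∀ f : ℓ^∞(ι, ℝ), (∀ i, 0 ≤ f i) → ∀ i, 0 ≤ T f i) {t : ℝ} (ht : 0 ≤ t)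
    {f : ℓ^∞(ι, ℝ)} (hf : ∀ i, 0 ≤ f i) (i : ι) : 0 ≤ exp (t • T) f i := by
  have hpow (k : ℕ) : ∀ j, 0 ≤ (T ^ k) f j := by
    induction k with
    | zero => exact hf
    | succ k ih => simpa only [pow_succ', mul_apply_eq_comp] using hT _ ih
  exact ((hasSum_exp_smul_apply T t f).mapL (lp.evalCLM ℝ (fun _ ↦ ℝ) ∞ i)).nonneg
    fun k ↦ mul_nonneg (by positivity) (hpow k i)

namespace WeightedGraph

variable {V : Type*} (G : WeightedGraph V)

/-- The averaging operator `M f (x) = ∑_{y ∼ x} p x y * f y`, for which `Δ = M - 1`. -/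
noncomputable def average (f : V → ℝ) (x : V) : ℝ := ∑' y, G.p x y * f y

theorem summable_p_mul (f : V → ℝ) (x : V) : Summable fun y ↦ G.p x y * f y :=
  summable_of_hasFiniteSupport <| (G.locallyFinite x).subset fun _ hy ↦
    (G.p_nonneg x _).lt_of_ne' (left_ne_zero_of_mul hy)

theorem average_add (f g : V → ℝ) : G.average (f + g) = G.average f + G.average g := by
  funext x
  simpa only [average, Pi.add_apply, mul_add] using
    (G.summable_p_mul f x).tsum_add (G.summable_p_mul g x)

theorem average_smul (c : ℝ) (f : V → ℝ) : G.average (c • f) = c • G.average f := by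
  funext x
  simp only [average, Pi.smul_apply, smul_eq_mul, mul_left_comm _ c, tsum_mul_left]

theorem abs_average_le {f : V → ℝ} {C : ℝ} (hf : ∀ y, |f y| ≤ C) (x : V) :
    |G.average f x| ≤ C := by
  have hC : HasSum (fun y ↦ G.p x y * C) C := by simpa using (G.markov x).mul_right C
  rw [← Real.norm_eq_abs]
  refine tsum_of_norm_bounded hC fun y ↦ ?_
  rw [norm_mul, Real.norm_of_nonneg (G.p_nonneg x y)]
  exact mul_le_mul_of_nonneg_left (hf y) (G.p_nonneg x y)

theorem lap_eq_average_sub (f : V → ℝ) : G.lap f = G.average f - f := by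
  funext x
  simp only [lap, average, Pi.sub_apply, mul_sub]
  rw [(G.summable_p_mul f x).tsum_sub (G.summable_p_mul (fun _ ↦ f x) x), tsum_mul_right,
    (G.markov x).tsum_eq, one_mul]

theorem gammaBil_eq_lap (f g : V → ℝ) :
    G.gammaBil f g = (1 / 2 : ℝ) • (G.lap (f * g) - f * G.lap g - g * G.lap f) := by
  funext x
  have hexpand y : G.p x y * (f y - f x) * (g y - g x) =
      G.p x y * ((f * g) y - (f * g) x) - f x * (G.p x y * (g y - g x)) -
        g x * (G.p x y * (f y - f x)) := by
    simp only [Pi.mul_apply]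
    ring
  simp only [gammaBil, lap, hexpand, Pi.smul_apply, Pi.sub_apply, Pi.mul_apply, smul_eq_mul]
  rw [Summable.tsum_sub, Summable.tsum_sub, tsum_mul_left, tsum_mul_left]
  · exact G.summable_p_mul (fun y ↦ (f * g) y - (f * g) x) x
  · exact (G.summable_p_mul (fun y ↦ g y - g x) x).mul_left _
  · exact (G.summable_p_mul (fun y ↦ (f * g) y - (f * g) x) x).sub
      ((G.summable_p_mul (fun y ↦ g y - g x) x).mul_left _)
  · exact (G.summable_p_mul (fun y ↦ f y - f x) x).mul_left _

theorem gammaBil_self (f : V → ℝ) : G.gammaBil f f = G.gamma f := by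
  funext x
  simp only [gammaBil, gamma, sq, mul_assoc]

/-- The averaging operator as a bounded operator on `ℓ^∞(V)`. -/
noncomputable def averageCLM : ℓ^∞(V, ℝ) →L[ℝ] ℓ^∞(V, ℝ) :=
  LinearMap.mkContinuous
    { toFun f := ⟨G.average f, memℓp_infty ⟨‖f‖, forall_mem_range.2
        (G.abs_average_le (lp.norm_apply_le_norm ENNReal.top_ne_zero f))⟩⟩
      map_add' f g := Subtype.ext (G.average_add f g)
      map_smul' c f := Subtype.ext (G.average_smul c f) }
    1 fun f ↦ by
      rw [one_mul]
      exact lp.norm_le_of_forall_le (norm_nonneg f)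
        (G.abs_average_le (lp.norm_apply_le_norm ENNReal.top_ne_zero f))

/-- The Laplacian as a bounded operator on `ℓ^∞(V)`. -/
noncomputable def lapCLM : ℓ^∞(V, ℝ) →L[ℝ] ℓ^∞(V, ℝ) := G.averageCLM - 1

theorem coe_lapCLM (f : ℓ^∞(V, ℝ)) : ⇑(G.lapCLM f) = G.lap f :=
  (G.lap_eq_average_sub f).symm

theorem coe_carreDuChamp_lapCLM (f g : ℓ^∞(V, ℝ)) :
    ⇑(carreDuChamp G.lapCLM f g) = G.gammaBil f g := by
  rw [gammaBil_eq_lap, ← coe_lapCLM, ← coe_lapCLM, ← lp.infty_coeFn_mul, ← coe_lapCLM]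
  rfl

theorem coe_carreDuChamp_lapCLM_self (f : ℓ^∞(V, ℝ)) :
    ⇑(carreDuChamp G.lapCLM f f) = G.gamma f := by
  rw [coe_carreDuChamp_lapCLM, gammaBil_self]

theorem coe_iteratedCarreDuChamp_lapCLM (f : ℓ^∞(V, ℝ)) :
    ⇑(iteratedCarreDuChamp G.lapCLM f) = G.gamma2 f := by
  funext x
  rw [gamma2, ← coe_carreDuChamp_lapCLM_self, ← coe_lapCLM, ← coe_lapCLM,
    ← coe_carreDuChamp_lapCLM]
  rfl

theorem coe_lapCLM_pow (k : ℕ) (f : ℓ^∞(V, ℝ)) : ⇑((G.lapCLM ^ k) f) = G.lap^[k] f := by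
  induction k with
  | zero => rfl
  | succ k ih =>
    rw [pow_succ', mul_apply_eq_comp, coe_lapCLM, ih, Function.iterate_succ_apply']

theorem coe_exp_smul_lapCLM (t : ℝ) (f : ℓ^∞(V, ℝ)) :
    ⇑(exp (t • G.lapCLM) f) = G.heatSem t f := by
  funext x
  have h := (hasSum_exp_smul_apply G.lapCLM t f).mapL (lp.evalCLM ℝ (fun _ ↦ ℝ) ∞ x)
  simp only [heatSem, ← coe_lapCLM_pow]
  exact h.tsum_eq.symm

theorem averageCLM_nonneg {f : ℓ^∞(V, ℝ)} (hf : ∀ x, 0 ≤ f x) (x : V) :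
    0 ≤ G.averageCLM f x :=
  tsum_nonneg fun y ↦ mul_nonneg (G.p_nonneg x y) (hf y)

theorem exp_smul_lapCLM_nonneg {t : ℝ} (ht : 0 ≤ t) {f : ℓ^∞(V, ℝ)} (hf : ∀ x, 0 ≤ f x) (x : V) :
    0 ≤ exp (t • G.lapCLM) f x := by
  rw [lapCLM, exp_smul_sub_one]
  exact mul_nonneg (Real.exp_pos _).le
    (exp_smul_apply_nonneg (fun _ ↦ G.averageCLM_nonneg) ht hf x)

theorem exp_smul_lapCLM_mono {t : ℝ} (ht : 0 ≤ t) {f g : ℓ^∞(V, ℝ)} (hfg : ∀ x, f x ≤ g x)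
    (x : V) : exp (t • G.lapCLM) f x ≤ exp (t • G.lapCLM) g x := by
  have h := G.exp_smul_lapCLM_nonneg ht (f := g - f) (fun y ↦ sub_nonneg.2 (hfg y)) x
  rw [map_sub] at h
  exact sub_nonneg.1 h

theorem lapCLM_one : G.lapCLM 1 = 0 := by
  refine lp.ext ?_
  rw [coe_lapCLM]
  funext x
  simp [lap]

theorem sq_exp_smul_lapCLM_le {t : ℝ} (ht : 0 ≤ t) (f : ℓ^∞(V, ℝ)) (x : V) :
    exp (t • G.lapCLM) f x ^ 2 ≤ exp (t • G.lapCLM) (f * f) x := by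
  let φ : ℓ^∞(V, ℝ) →L[ℝ] ℝ := (lp.evalCLM ℝ (fun _ ↦ ℝ) ∞ x).comp (exp (t • G.lapCLM))
  refine sq_map_le_map_mul_self φ.toLinearMap
    (fun g ↦ G.exp_smul_lapCLM_nonneg ht (fun y ↦ mul_self_nonneg (g y)) x) ?_ f
  exact congrArg (fun g : ℓ^∞(V, ℝ) ↦ g x) (exp_smul_apply_of_apply_eq_zero G.lapCLM_one t)

theorem mul_sq_exp_smul_lapCLM_le {c : ℝ} (hc : 0 ≤ c)
    (hcurv : ∀ (f : V → ℝ) (x : V), c * G.lap f x ^ 2 ≤ G.gamma2 f x)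
    {t : ℝ} (ht : 0 ≤ t) (f : ℓ^∞(V, ℝ)) (x : V) :
    c * exp (t • G.lapCLM) (G.lapCLM f) x ^ 2 ≤
      exp (t • G.lapCLM) (iteratedCarreDuChamp G.lapCLM f) x := by
  have hcurv' y : (c • (G.lapCLM f * G.lapCLM f)) y ≤ iteratedCarreDuChamp G.lapCLM f y := by
    rw [coe_iteratedCarreDuChamp_lapCLM, lp.coeFn_smul, lp.infty_coeFn_mul, coe_lapCLM]
    simpa [sq] using hcurv f y
  calc c * exp (t • G.lapCLM) (G.lapCLM f) x ^ 2
      ≤ c * exp (t • G.lapCLM) (G.lapCLM f * G.lapCLM f) x :=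
        mul_le_mul_of_nonneg_left (G.sq_exp_smul_lapCLM_le ht _ x) hc
    _ = exp (t • G.lapCLM) (c • (G.lapCLM f * G.lapCLM f)) x := by
        rw [map_smul]
        rfl
    _ ≤ exp (t • G.lapCLM) (iteratedCarreDuChamp G.lapCLM f) x :=
        G.exp_smul_lapCLM_mono ht hcurv' x

end WeightedGraph

/-- The constant `c` plays the role of `1 / n` in `CD(0, n)`; in particular `c = 0` is
`CD(0, ∞)`. -/
theorem gamma_heat_semigroup_CD_zero_n_general {V : Type*} (G : WeightedGraph V) {c : ℝ}
    (hc : 0 ≤ c) (hcurv : ∀ (f : V → ℝ) (x : V), c * G.lap f x ^ 2 ≤ G.gamma2 f x)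
    {f : V → ℝ} (hf : BddAbove (Set.range fun x ↦ |f x|)) {t : ℝ} (ht : 0 ≤ t) (x : V) :
    G.gamma (G.heatSem t f) x ≤
      G.heatSem t (G.gamma f) x - 2 * t * c * G.heatSem t (G.lap f) x ^ 2 := by
  obtain ⟨f, rfl⟩ : ∃ g : ℓ^∞(V, ℝ), ⇑g = f := ⟨⟨f, memℓp_infty hf⟩, rfl⟩
  simp only [← G.coe_lapCLM, ← G.coe_exp_smul_lapCLM, ← G.coe_carreDuChamp_lapCLM_self]
  exact apply_carreDuChamp_exp_smul_le G.lapCLM (lp.evalCLM ℝ (fun _ ↦ ℝ) ∞ x) ht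
    (fun s hs g ↦ G.mul_sq_exp_smul_lapCLM_le hc hcurv hs.1 g x) f

/-- On a weighted graph with bounded geometry satisfying `CD(0,n)`,
for every bounded `f`, `t > 0` and `x`,
`Γ(P_t f)(x) ≤ P_t(Γf)(x) - (2t/n) (P_t(Δf)(x))²`. -/
theorem gamma_heat_semigroup_CD_zero_n {V : Type*} [Countable V]
    (G : WeightedGraph V) (α : ℝ) (n : ℕ) (hn : 0 < n)
    (hbg : G.BoundedGeometry α) (hCD : G.CD 0 n)
    (f : V → ℝ) (hf : BddAbove (Set.range fun x => |f x|))
    (t : ℝ) (ht : 0 < t) (x : V) :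
    G.gamma (G.heatSem t f) x ≤
      G.heatSem t (G.gamma f) x - (2 * t / (n : ℝ)) * (G.heatSem t (G.lap f) x) ^ 2 := by
  have hcurv f x : 1 / (n : ℝ) * G.lap f x ^ 2 ≤ G.gamma2 f x := by simpa using hCD f x
  simpa [div_eq_mul_inv] using
    gamma_heat_semigroup_CD_zero_n_general G (by positivity) hcurv hf ht.le x
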